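/- arXiv:1604.03596 — 4 statements merged into one kernel-verified Lean document; each statement's English description precedes it below -/
import Mathlib

section
/- Restriction Principle (decomposition form). Let k be a field, n ≥ 3, and d a zigzag shape of length n such that for some index 2 ≤ κ ≤ n−1 the two structure maps at positions κ−1 and κ point in the same direction (say both forward, giving maps g : V_{κ−1} → V_κ and h : V_κ → V_{κ+1}; the backward case is symmetric). Let V be a zigzag module of shape d, and let W be the zigzag module over the index set {1,…,n}∖{κ} (relabelled as 1,…,n−1) obtained from V by deleting the space V_κ and replacing the pair of maps g, h by the composite h∘g, keeping all other spaces and maps. Suppose V is isomorphic, as a zigzag module, to a direct sum ⊕_{i∈I} I[p_i, q_i] of interval modules of shape d, indexed by an arbitrary set I. Then W is isomorphic to the direct sum, over those i ∈ I with [p_i, q_i] ≠ [κ, κ], of the interval modules over the restricted intervals, where the restriction of an interval [p, q] removes the index κ: an interval not containing κ, or containing κ in its interior, restricts to [p,q]∖{κ}; an interval [p, κ] with p < κ restricts to [p, κ−1]; and an interval [κ, q] with q > κ restricts to [κ+1, q] (all reindexed along the relabelling of {1,…,n}∖{κ} as {1,…,n−1}). -/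
/-!
Zigzag modules indexed by the natural numbers (0-based).  A zigzag module of
length `n` in the sense of the paper (spaces `V_1, …, V_n`, 1-based) is encoded
with spaces indexed by `0, …, n-1`; a shape `d : ℕ → Bool` records, for each
`i`, whether the structure map between positions `i` and `i+1` points forward
(`true`) or backward (`false`).
-/

/-- A zigzag module of shape `d` over the field `k`. -/
structure ZigzagModule (k : Type) [Field k] (d : ℕ → Bool) where
  V : ℕ → Type
  [acg : ∀ i, AddCommGroup (V i)]
  [mod : ∀ i, Module k (V i)]
  fwd : ∀ i, d i = true → (V i →ₗ[k] V (i + 1))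
  bwd : ∀ i, d i = false → (V (i + 1) →ₗ[k] V i)

attribute [instance] ZigzagModule.acg ZigzagModule.mod

/-- An isomorphism of zigzag modules of the same shape: a family of linear
equivalences commuting with all structure maps. -/
structure ZigzagIso {k : Type} [Field k] {d : ℕ → Bool}
    (M N : ZigzagModule k d) where
  e : ∀ i, M.V i ≃ₗ[k] N.V i
  comm_fwd : ∀ i (h : d i = true) (x : M.V i),
    e (i + 1) (M.fwd i h x) = N.fwd i h (e i x)
  comm_bwd : ∀ i (h : d i = false) (x : M.V (i + 1)),
    e i (M.bwd i h x) = N.bwd i h (e (i + 1) x)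

/-- The `i`-th space of the interval module `I[p,q]`, realized as the submodule
`⊤` of `k` (a copy of `k`) when `p ≤ i ≤ q` and the submodule `⊥` (the zero
space) otherwise. -/
def intervalSpace (k : Type) [Field k] (p q i : ℕ) : Submodule k k :=
  if p ≤ i ∧ i ≤ q then ⊤ else ⊥

open Classical in
/-- The structure map of an interval module: the identity (inclusion) if both
endpoints lie in the interval, the zero map otherwise. -/
noncomputable def intervalMap (k : Type) [Field k] (p q i j : ℕ) :
    (intervalSpace k p q i) →ₗ[k] (intervalSpace k p q j) :=
  if h : intervalSpace k p q i ≤ intervalSpace k p q j then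
    Submodule.inclusion h
  else 0

/-- The interval module `I[p,q]` of shape `d`: a copy of `k` at each index
`p ≤ i ≤ q`, the zero space elsewhere; identity maps between consecutive copies
of `k`, zero maps elsewhere. -/
noncomputable def intervalModule (k : Type) [Field k] (d : ℕ → Bool)
    (p q : ℕ) : ZigzagModule k d where
  V i := intervalSpace k p q i
  fwd i _ := intervalMap k p q i (i + 1)
  bwd i _ := intervalMap k p q (i + 1) i

/-- Pointwise direct sum of a family of zigzag modules of the same shape. -/
noncomputable def dsumModule (k : Type) [Field k] (d : ℕ → Bool)
    (I : Type) [DecidableEq I] (F : I → ZigzagModule k d) :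
    ZigzagModule k d where
  V i := DirectSum I fun j => (F j).V i
  fwd i h := DirectSum.toModule k I _ fun j =>
    (DirectSum.lof k I (fun j => (F j).V (i + 1)) j).comp ((F j).fwd i h)
  bwd i h := DirectSum.toModule k I _ fun j =>
    (DirectSum.lof k I (fun j => (F j).V i) j).comp ((F j).bwd i h)

/-- Relabelling of indices after deleting the index `κ`:
index `i` of the new module corresponds to index `i` (if `i < κ`) or `i + 1`
(if `i ≥ κ`) of the old module. -/
def delIdx (κ i : ℕ) : ℕ := if i < κ then i else i + 1

/-- The shape obtained from `d` by deleting the index `κ` and composing the two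
(equally directed) structure maps at positions `κ - 1` and `κ`. -/
def delShape (d : ℕ → Bool) (κ : ℕ) : ℕ → Bool :=
  fun i => if i < κ then d i else d (i + 1)

/-- The zigzag module obtained from `V` by deleting the space at index `κ`
(where the structure maps at positions `κ - 1` and `κ` both point forward) and
replacing the two maps `g : V_{κ-1} → V_κ` and `h : V_κ → V_{κ+1}` by their
composite `h ∘ g`, keeping all other spaces and maps. -/
noncomputable def deleteModule {k : Type} [Field k] {d : ℕ → Bool}
    (V : ZigzagModule k d) (κ : ℕ) (hκ : 1 ≤ κ)
    (hd1 : d (κ - 1) = true) (hd2 : d κ = true) :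
    ZigzagModule k (delShape d κ) where
  V i := V.V (delIdx κ i)
  fwd i h := by
    show V.V (delIdx κ i) →ₗ[k] V.V (delIdx κ (i + 1))
    refine if hlt : i + 1 < κ then ?_ else if heq : i + 1 = κ then ?_ else ?_
    · -- both indices below κ : the original map at position `i`
      have e1 : delIdx κ i = i := if_pos (by omega)
      have e2 : delIdx κ (i + 1) = i + 1 := if_pos hlt
      rw [e1, e2]
      exact V.fwd i (by
        have hi : i < κ := by omega
        simpa [delShape, hi] using h)
    · -- `i = κ - 1` : the composite of the two maps at positions `κ-1` and `κ`
      have e1 : delIdx κ i = i := if_pos (by omega)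
      have e2 : delIdx κ (i + 1) = κ + 1 := by
        rw [delIdx, if_neg (by omega), heq]
      rw [e1, e2]
      have hdi : d i = true := by
        have hi : i = κ - 1 := by omega
        rw [hi]; exact hd1
      exact (V.fwd κ hd2).comp (heq ▸ V.fwd i hdi)
    · -- both indices at or above κ : the original map at position `i + 1`
      have e1 : delIdx κ i = i + 1 := by rw [delIdx, if_neg (by omega)]
      have e2 : delIdx κ (i + 1) = i + 2 := by rw [delIdx, if_neg (by omega)]
      rw [e1, e2]
      exact V.fwd (i + 1)
        (by
        have hi : ¬ i < κ := by omega
        simpa [delShape, hi] using h)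
  bwd i h := by
    show V.V (delIdx κ (i + 1)) →ₗ[k] V.V (delIdx κ i)
    refine if hlt : i + 1 < κ then ?_ else if heq : i + 1 = κ then ?_ else ?_
    · have e1 : delIdx κ i = i := if_pos (by omega)
      have e2 : delIdx κ (i + 1) = i + 1 := if_pos hlt
      rw [e1, e2]
      exact V.bwd i (by
        have hi : i < κ := by omega
        simpa [delShape, hi] using h)
    · -- impossible: the map at position `κ - 1` points forward
      exfalso
      have hdi : d i = false := by
        have hi : i < κ := by omega
        simpa [delShape, hi] using h
      have hi : i = κ - 1 := by omega
      rw [hi, hd1] at hdi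
      simp at hdi
    · have e1 : delIdx κ i = i + 1 := by rw [delIdx, if_neg (by omega)]
      have e2 : delIdx κ (i + 1) = i + 2 := by rw [delIdx, if_neg (by omega)]
      rw [e1, e2]
      exact V.bwd (i + 1)
        (by
        have hi : ¬ i < κ := by omega
        simpa [delShape, hi] using h)

section Helpers

variable {k : Type} [Field k] {d : ℕ → Bool}

theorem intervalMap_coe (p q i j : ℕ) [Decidable (intervalSpace k p q i ≤ intervalSpace k p q j)]
    (x : intervalSpace k p q i) :
    ((intervalMap k p q i j x : intervalSpace k p q j) : k) =
      if intervalSpace k p q i ≤ intervalSpace k p q j then (x : k) else 0 := by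
  unfold intervalMap
  split_ifs <;> simp

theorem intervalSpace_del (κ p q i : ℕ) (hκ : 1 ≤ κ) :
    intervalSpace k (if p ≤ κ then p else p - 1) (if q < κ then q else q - 1) i =
      intervalSpace k p q (delIdx κ i) := by
  unfold intervalSpace delIdx
  congr 1
  apply propext
  split_ifs <;> omega

theorem intervalSpace_kk (κ i : ℕ) : intervalSpace k κ κ (delIdx κ i) = ⊥ := by
  unfold intervalSpace delIdx
  rw [if_neg]
  split_ifs <;> omega

theorem dsum_map_apply {I : Type} [DecidableEq I] {A B : I → Type}
    [∀ i, AddCommGroup (A i)] [∀ i, Module k (A i)]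
    [∀ i, AddCommGroup (B i)] [∀ i, Module k (B i)]
    (f : ∀ i, A i →ₗ[k] B i) (x : DirectSum I A) (j : I) :
    (DirectSum.toModule k I (DirectSum I B) (fun j => (DirectSum.lof k I B j).comp (f j)) x) j
      = f j (x j) := by
  have : (DirectSum.component k I B j).comp
      (DirectSum.toModule k I (DirectSum I B) (fun j => (DirectSum.lof k I B j).comp (f j)))
      = (f j).comp (DirectSum.component k I A j) := by
    apply DirectSum.linearMap_ext
    intro i
    ext y
    simp only [LinearMap.comp_apply, DirectSum.toModule_lof]
    by_cases h : i = j
    · subst h; simp [DirectSum.component.lof_self]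
    · rw [DirectSum.component.of, DirectSum.component.of, dif_neg h, dif_neg h, map_zero]
  exact LinearMap.congr_fun this x

/-- Restriction of direct sums to a subfamily outside of which all summands vanish. -/
theorem exists_restrict {I : Type} [DecidableEq I] (P : I → Prop) (S : I → Submodule k k)
    (T : {i // P i} → Submodule k k) (hT : ∀ j, T j = S j.1) (hS : ∀ i, ¬ P i → S i = ⊥) :
    ∃ E : (DirectSum I fun i => S i) ≃ₗ[k] (DirectSum {i // P i} fun j => T j),
      ∀ x j, ((E x) j : k) = (x j.1 : k) := by
  classical
  obtain rfl : T = fun j => S j.1 := funext hT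
  let F : (DirectSum I fun i => S i) →ₗ[k] (DirectSum {i // P i} fun j => S j.1) :=
    DFinsupp.subtypeDomainLinearMap k (fun i => S i) P
  have hF : ∀ x j, (F x) j = x j.1 := fun x j => rfl
  refine ⟨LinearEquiv.ofBijective F ⟨?_, ?_⟩, fun x j => rfl⟩
  · intro x y h
    refine DFinsupp.ext fun i => ?_
    by_cases hi : P i
    · have := congrArg (fun z => z ⟨i, hi⟩) h
      simpa [hF] using this
    · have hb := hS i hi
      apply Subtype.ext
      have h1 : ((x i : S i) : k) = 0 := (Submodule.mem_bot k).1 (hb ▸ (x i).2)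
      have h2 : ((y i : S i) : k) = 0 := (Submodule.mem_bot k).1 (hb ▸ (y i).2)
      exact h1.trans h2.symm
  · intro y
    induction y using DirectSum.induction_on with
    | zero => exact ⟨0, map_zero _⟩
    | of j y =>
      refine ⟨DirectSum.of (fun i => S i) j.1 y, ?_⟩
      refine DFinsupp.ext fun j' => ?_
      change (DirectSum.of (fun i => S i) j.1 y) j'.1 = (DirectSum.of (fun j : {i // P i} => S j.1) j y) j'
      by_cases h : j = j'
      · subst h
        rw [DirectSum.of_eq_same, DirectSum.of_eq_same]
      · rw [DirectSum.of_eq_of_ne _ _ _ (Ne.symm h), DirectSum.of_eq_of_ne]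
        exact fun h' => h (Subtype.ext h'.symm)
    | add a b ha hb =>
      obtain ⟨a, rfl⟩ := ha
      obtain ⟨b, rfl⟩ := hb
      exact ⟨a + b, map_add _ _ _⟩

variable {I : Type} [DecidableEq I] {p q : I → ℕ} {V : ZigzagModule k d}

/-- Coordinates with respect to an interval decomposition. -/
noncomputable def zco
    (φ : ZigzagIso V (dsumModule k d I fun i => intervalModule k d (p i) (q i)))
    (i : ℕ) (j : I) (x : V.V i) : k :=
  let y : DirectSum I fun j => intervalSpace k (p j) (q j) i := φ.e i x
  ((y j : intervalSpace k (p j) (q j) i) : k)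

variable (φ : ZigzagIso V (dsumModule k d I fun i => intervalModule k d (p i) (q i)))

theorem zco_mem (i : ℕ) (j : I) (x : V.V i) : zco φ i j x ∈ intervalSpace k (p j) (q j) i :=
  Subtype.mem _

open Classical in
theorem zco_fwd (i : ℕ) (j : I) (h : d i = true) (x : V.V i) :
    zco φ (i + 1) j (V.fwd i h x) =
      if intervalSpace k (p j) (q j) i ≤ intervalSpace k (p j) (q j) (i + 1)
      then zco φ i j x else 0 := by
  unfold zco
  rw [φ.comm_fwd, ← intervalMap_coe]
  exact congrArg Subtype.val (dsum_map_apply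
    (fun j => intervalMap k (p j) (q j) i (i + 1)) (φ.e i x) j)

open Classical in
theorem zco_bwd (i : ℕ) (j : I) (h : d i = false) (x : V.V (i + 1)) :
    zco φ i j (V.bwd i h x) =
      if intervalSpace k (p j) (q j) (i + 1) ≤ intervalSpace k (p j) (q j) i
      then zco φ (i + 1) j x else 0 := by
  unfold zco
  rw [φ.comm_bwd, ← intervalMap_coe]
  exact congrArg Subtype.val (dsum_map_apply
    (fun j => intervalMap k (p j) (q j) (i + 1) i) (φ.e (i + 1) x) j)

open Classical in
theorem zco_comp (i : ℕ) (j : I) (h : d i = true) (h' : d (i + 1) = true) (x : V.V i) :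
    zco φ (i + 1 + 1) j (V.fwd (i + 1) h' (V.fwd i h x)) =
      if intervalSpace k (p j) (q j) i ≤ intervalSpace k (p j) (q j) (i + 1 + 1)
      then zco φ i j x else 0 := by
  rw [zco_fwd, zco_fwd]
  have hm := zco_mem φ i j x
  generalize zco φ i j x = c at hm
  have hbt : (⊥ : Submodule k k) ≤ ⊤ := le_top
  have htt : (⊤ : Submodule k k) ≤ ⊤ := le_top
  have htb : ¬ (⊤ : Submodule k k) ≤ ⊥ := fun h =>
    one_ne_zero ((Submodule.mem_bot k).1 (h (Submodule.mem_top (x := (1 : k)))))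
  by_cases h0 : p j ≤ i ∧ i ≤ q j
  · by_cases h2 : p j ≤ i + 1 + 1 ∧ i + 1 + 1 ≤ q j
    · have h1 : p j ≤ i + 1 ∧ i + 1 ≤ q j := by omega
      simp only [intervalSpace, h0, h1, h2, and_self, if_true, if_false, hbt, htt, htb, ite_self]
    · by_cases h1 : p j ≤ i + 1 ∧ i + 1 ≤ q j <;>
        simp only [intervalSpace, h0, h1, h2, and_self, if_true, if_false, hbt, htt, htb, ite_self]
  · have : c = 0 := by
      rw [intervalSpace, if_neg h0] at hm
      exact (Submodule.mem_bot k).1 hm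
    subst this
    simp

/-- The coordinate condition on a map between two spaces of `V`. -/
def ZGood (a b : ℕ) (f : V.V a →ₗ[k] V.V b) : Prop :=
  ∀ (j : I) (x : V.V a), zco φ b j (f x) =
    open Classical in
    if intervalSpace k (p j) (q j) a ≤ intervalSpace k (p j) (q j) b
      then zco φ a j x else 0

theorem ZGood.of_heq {a b a' b' : ℕ} {f : V.V a →ₗ[k] V.V b} {g : V.V a' →ₗ[k] V.V b'}
    (hg : ZGood φ a' b' g) (ha : a = a') (hb : b = b') (h : f ≍ g) : ZGood φ a b f := by
  subst ha hb
  cases h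
  exact hg

theorem good_del_fwd (κ : ℕ) (hκ : 1 ≤ κ) (hd1 : d (κ - 1) = true) (hd2 : d κ = true)
    (i : ℕ) (h : delShape d κ i = true) :
    ZGood φ (delIdx κ i) (delIdx κ (i + 1)) ((deleteModule V κ hκ hd1 hd2).fwd i h) := by
  by_cases hlt : i + 1 < κ
  · have hi : i < κ := by omega
    have h' : d i = true := by simpa [delShape, hi] using h
    refine ZGood.of_heq φ (g := V.fwd i h') (fun j x => zco_fwd φ i j h' x)
      (if_pos hi) (if_pos hlt) ?_
    simp only [deleteModule, dif_pos hlt]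
    simp
  · by_cases heq : i + 1 = κ
    · subst heq
      have h' : d i = true := hd1
      refine ZGood.of_heq φ (g := (V.fwd (i + 1) hd2).comp (V.fwd i h'))
        (fun j x => zco_comp φ i j h' hd2 x)
        (if_pos (by omega)) (if_neg (by omega)) ?_
      simp only [deleteModule, dif_neg hlt]
      simp
    · have hi : ¬ i < κ := by omega
      have h' : d (i + 1) = true := by simpa [delShape, hi] using h
      refine ZGood.of_heq φ (g := V.fwd (i + 1) h') (fun j x => zco_fwd φ (i + 1) j h' x)
        (if_neg hi) (if_neg (by omega)) ?_
      simp only [deleteModule, dif_neg hlt, dif_neg heq]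
      simp

theorem good_del_bwd (κ : ℕ) (hκ : 1 ≤ κ) (hd1 : d (κ - 1) = true) (hd2 : d κ = true)
    (i : ℕ) (h : delShape d κ i = false) :
    ZGood φ (delIdx κ (i + 1)) (delIdx κ i) ((deleteModule V κ hκ hd1 hd2).bwd i h) := by
  by_cases hlt : i + 1 < κ
  · have hi : i < κ := by omega
    have h' : d i = false := by simpa [delShape, hi] using h
    refine ZGood.of_heq φ (g := V.bwd i h') (fun j x => zco_bwd φ i j h' x)
      (if_pos hlt) (if_pos hi) ?_
    simp only [deleteModule, dif_pos hlt]
    simp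
  · by_cases heq : i + 1 = κ
    · subst heq
      have h' : d i = true := hd1
      simp [delShape, h'] at h
    · have hi : ¬ i < κ := by omega
      have h' : d (i + 1) = false := by simpa [delShape, hi] using h
      refine ZGood.of_heq φ (g := V.bwd (i + 1) h') (fun j x => zco_bwd φ (i + 1) j h' x)
        (if_neg (by omega)) (if_neg hi) ?_
      simp only [deleteModule, dif_neg hlt, dif_neg heq]
      simp

end Helpers

/-- **Restriction Principle (decomposition form).**
Let `d` be a zigzag shape whose structure maps at positions `κ-1` and `κ`
(0-based; `1 ≤ κ`, `κ + 1 < n`) both point forward, and let `V` be a zigzag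
module of shape `d` that decomposes as a direct sum `⊕_{i∈I} I[p_i, q_i]` of
interval modules supported in `[0, n)`.  Then the module `W` obtained from `V`
by deleting the space at index `κ` and composing the two maps there decomposes
as the direct sum, over those `i ∈ I` with `[p_i, q_i] ≠ [κ, κ]`, of the
interval modules over the restricted intervals, reindexed along the relabelling
of `{0, …, n-1} \ {κ}` as `{0, …, n-2}`: an interval not containing `κ`, or
containing `κ` in its interior, restricts to `[p,q] \ {κ}`; `[p, κ]` with
`p < κ` restricts to `[p, κ-1]`; and `[κ, q]` with `q > κ` restricts to
`[κ+1, q]` (relabelled as `[κ, q-1]`). -/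
theorem restriction_principle
    (k : Type) [Field k] (n : ℕ) (hn : 3 ≤ n) (d : ℕ → Bool)
    (κ : ℕ) (hκ1 : 1 ≤ κ) (hκn : κ + 1 < n)
    (hd1 : d (κ - 1) = true) (hd2 : d κ = true)
    (V : ZigzagModule k d)
    (I : Type) [DecidableEq I] (p q : I → ℕ)
    (hpq : ∀ i, p i ≤ q i) (hqn : ∀ i, q i < n)
    (hiso : Nonempty (ZigzagIso V
      (dsumModule k d I fun i => intervalModule k d (p i) (q i)))) :
    Nonempty (ZigzagIso
      (deleteModule V κ hκ1 hd1 hd2)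
      (dsumModule k (delShape d κ) {i : I // ¬ (p i = κ ∧ q i = κ)}
        (fun i => intervalModule k (delShape d κ)
          (if p i.1 ≤ κ then p i.1 else p i.1 - 1)
          (if q i.1 < κ then q i.1 else q i.1 - 1)))) := by
  classical
  obtain ⟨φ⟩ := hiso
  have key : ∀ i, ∃ E : (DirectSum I fun j => intervalSpace k (p j) (q j) (delIdx κ i)) ≃ₗ[k]
      (DirectSum {i : I // ¬ (p i = κ ∧ q i = κ)} fun j => intervalSpace k
        (if p j.1 ≤ κ then p j.1 else p j.1 - 1) (if q j.1 < κ then q j.1 else q j.1 - 1) i),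
      ∀ x j, ((E x) j : k) = (x j.1 : k) := by
    intro i
    refine exists_restrict _ _ _ (fun j => intervalSpace_del κ _ _ i hκ1) ?_
    intro j hj
    obtain ⟨h1, h2⟩ := not_not.1 hj
    rw [h1, h2]
    exact intervalSpace_kk κ i
  choose E hE using key
  refine ⟨⟨fun i => (φ.e (delIdx κ i)).trans (E i), ?_, ?_⟩⟩
  · intro i h x
    refine DFinsupp.ext fun j => Subtype.ext ?_
    refine (hE (i + 1) _ j).trans ?_
    refine (good_del_fwd φ κ hκ1 hd1 hd2 i h j.1 x).trans ?_
    refine Eq.trans ?_ (congrArg Subtype.val (dsum_map_apply (fun j : {i : I // ¬ (p i = κ ∧ q i = κ)} =>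
      intervalMap k (if p j.1 ≤ κ then p j.1 else p j.1 - 1)
        (if q j.1 < κ then q j.1 else q j.1 - 1) i (i + 1)) (E i (φ.e (delIdx κ i) x)) j)).symm
    rw [intervalMap_coe]
    exact if_congr (by simp only [intervalSpace_del _ _ _ _ hκ1]) (hE i _ j).symm rfl
  · intro i h x
    refine DFinsupp.ext fun j => Subtype.ext ?_
    refine (hE i _ j).trans ?_
    refine (good_del_bwd φ κ hκ1 hd1 hd2 i h j.1 x).trans ?_
    refine Eq.trans ?_ (congrArg Subtype.val (dsum_map_apply (fun j : {i : I // ¬ (p i = κ ∧ q i = κ)} =>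
      intervalMap k (if p j.1 ≤ κ then p j.1 else p j.1 - 1)
        (if q j.1 < κ then q j.1 else q j.1 - 1) (i + 1) i)
        (E (i + 1) (φ.e (delIdx κ (i + 1)) x)) j)).symm
    rw [intervalMap_coe]
    exact if_congr (by simp only [intervalSpace_del _ _ _ _ hκ1]) (hE (i + 1) _ j).symm rfl
end

section
/- Abstract braid diagram chase (equivalence of the two tautness criteria). Let k be a field and let A₁, B₁, U₁, P_A, P_B, A₀, B₀, U₀, Q_A, Q_B be k-vector spaces equipped with linear maps a₁ : A₁ → U₁, b₁ : B₁ → U₁, p_A : U₁ → P_A, p_B : U₁ → P_B, ∂_A : P_A → A₀, ∂_B : P_B → B₀, i_A : A₀ → U₀, i_B : B₀ → U₀, r_A : U₀ → Q_A, r_B : U₀ → Q_B. Assume the sequence A₁ →a₁ U₁ →p_A P_A →∂_A A₀ →i_A U₀ →r_A Q_A is exact at U₁, at P_A, at A₀ and at U₀, and the sequence B₁ →b₁ U₁ →p_B P_B →∂_B B₀ →i_B U₀ →r_B Q_B is exact at U₁, at P_B, at B₀ and at U₀. If the composite p_B ∘ a₁ is surjective and the composite r_B ∘ i_A is injective, then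 the composite p_A ∘ b₁ is surjective and the composite r_A ∘ i_B is injective. -/
/-- **Abstract braid diagram chase (equivalence of the two tautness criteria).**
Two five-map sequences of `k`-vector spaces sharing the objects `U₁` and `U₀`,
each exact at its four middle objects.  If `pB ∘ a₁` is surjective and
`rB ∘ iA` is injective, then `pA ∘ b₁` is surjective and `rA ∘ iB` is
injective. -/
theorem braid_diagram_chase
    (k : Type) [Field k]
    (A₁ B₁ U₁ PA PB A₀ B₀ U₀ QA QB : Type)
    [AddCommGroup A₁] [Module k A₁] [AddCommGroup B₁] [Module k B₁]
    [AddCommGroup U₁] [Module k U₁] [AddCommGroup PA] [Module k PA]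
    [AddCommGroup PB] [Module k PB] [AddCommGroup A₀] [Module k A₀]
    [AddCommGroup B₀] [Module k B₀] [AddCommGroup U₀] [Module k U₀]
    [AddCommGroup QA] [Module k QA] [AddCommGroup QB] [Module k QB]
    (a₁ : A₁ →ₗ[k] U₁) (b₁ : B₁ →ₗ[k] U₁)
    (pA : U₁ →ₗ[k] PA) (pB : U₁ →ₗ[k] PB)
    (dA : PA →ₗ[k] A₀) (dB : PB →ₗ[k] B₀)
    (iA : A₀ →ₗ[k] U₀) (iB : B₀ →ₗ[k] U₀)
    (rA : U₀ →ₗ[k] QA) (rB : U₀ →ₗ[k] QB)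
    (hA1 : Function.Exact a₁ pA) (hA2 : Function.Exact pA dA)
    (hA3 : Function.Exact dA iA) (hA4 : Function.Exact iA rA)
    (hB1 : Function.Exact b₁ pB) (hB2 : Function.Exact pB dB)
    (hB3 : Function.Exact dB iB) (hB4 : Function.Exact iB rB)
    (hsurj : Function.Surjective (pB ∘ₗ a₁))
    (hinj : Function.Injective (rB ∘ₗ iA)) :
    Function.Surjective (pA ∘ₗ b₁) ∧ Function.Injective (rA ∘ₗ iB) := by
  constructor
  · intro x
    have h0 : dA x = 0 := by
      apply hinj
      simp [hA3.apply_apply_eq_zero x]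
    obtain ⟨u, rfl⟩ := (hA2 x).1 h0
    obtain ⟨a, ha⟩ := hsurj (pB u)
    have h1 : pB (u - a₁ a) = 0 := by
      rw [map_sub, ← ha, LinearMap.comp_apply, sub_self]
    obtain ⟨b, hb⟩ := (hB1 _).1 h1
    refine ⟨b, ?_⟩
    rw [LinearMap.comp_apply, hb, map_sub, hA1.apply_apply_eq_zero a, sub_zero]
  · rw [injective_iff_map_eq_zero]
    intro y hy
    obtain ⟨z, hz⟩ := (hA4 (iB y)).1 hy
    have hz0 : z = 0 := by
      apply hinj
      simp [hz, hB4.apply_apply_eq_zero y]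
    rw [hz0, map_zero] at hz
    obtain ⟨p, rfl⟩ := (hB3 y).1 hz.symm
    obtain ⟨a, rfl⟩ := hsurj p
    exact hB2.apply_apply_eq_zero (a₁ a)
end

section
/- Abstract ladder lemma (tautness implies exactness of the Mayer–Vietoris diamond). Let k be a field and let B₁, Y, B, P and A₁, A, U, Q be k-vector spaces with linear maps forming two rows ∂ : B₁ → Y, i₂ : Y → B, π : B → P and ∂' : A₁ → A, j₁ : A → U, π' : U → Q, and vertical linear maps ε : B₁ → A₁, i₁ : Y → A, j₂ : B → U, μ : P → Q. Assume: (1) the top row is exact at Y (the kernel of i₂ equals the range of ∂) and exact at B (the kernel of π equals the range of i₂); (2) the bottom row is exact at A (the kernel of j₁ equals the range of ∂') and exact at U (the kernel of π' equals the range of j₁); (3) the squares commute: ∂' ∘ ε = i₁ ∘ ∂, j₁ ∘ i₁ = j₂ ∘ i₂, and π' ∘ j₂ = μ ∘ π; (4) ε is surjective and μ is injective. Then for all a ∈ A and b ∈ B, one has j₁(a) = j₂(b) if and only if there exists y ∈ Y with i₁(y) = a and i₂(y) = b. -/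
/-- **Abstract ladder lemma (tautness implies exactness of the Mayer–Vietoris
diamond).**  Given two exact rows `B₁ → Y → B → P` and `A₁ → A → U → Q`,
connected by vertical maps `ε, i₁, j₂, μ` making the three squares commute,
with `ε` surjective and `μ` injective, the diamond `Y → A, Y → B, A → U, B → U`
is exact in the Mayer–Vietoris sense. -/
theorem ladder_lemma
    (k : Type) [Field k]
    (B₁ Y B P A₁ A U Q : Type)
    [AddCommGroup B₁] [Module k B₁] [AddCommGroup Y] [Module k Y]
    [AddCommGroup B] [Module k B] [AddCommGroup P] [Module k P]
    [AddCommGroup A₁] [Module k A₁] [AddCommGroup A] [Module k A]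
    [AddCommGroup U] [Module k U] [AddCommGroup Q] [Module k Q]
    (bd : B₁ →ₗ[k] Y) (i₂ : Y →ₗ[k] B) (π : B →ₗ[k] P)
    (ad : A₁ →ₗ[k] A) (j₁ : A →ₗ[k] U) (π' : U →ₗ[k] Q)
    (ε : B₁ →ₗ[k] A₁) (i₁ : Y →ₗ[k] A) (j₂ : B →ₗ[k] U) (μ : P →ₗ[k] Q)
    (htop1 : Function.Exact bd i₂) (htop2 : Function.Exact i₂ π)
    (hbot1 : Function.Exact ad j₁) (hbot2 : Function.Exact j₁ π')
    (hsq1 : ad ∘ₗ ε = i₁ ∘ₗ bd)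
    (hsq2 : j₁ ∘ₗ i₁ = j₂ ∘ₗ i₂)
    (hsq3 : π' ∘ₗ j₂ = μ ∘ₗ π)
    (hε : Function.Surjective ε) (hμ : Function.Injective μ) :
    ∀ (a : A) (b : B), j₁ a = j₂ b ↔ ∃ y : Y, i₁ y = a ∧ i₂ y = b := by
  intro a b
  have s1 : ∀ x, ad (ε x) = i₁ (bd x) := fun x => LinearMap.congr_fun hsq1 x
  have s2 : ∀ x, j₁ (i₁ x) = j₂ (i₂ x) := fun x => LinearMap.congr_fun hsq2 x
  have s3 : ∀ x, π' (j₂ x) = μ (π x) := fun x => LinearMap.congr_fun hsq3 x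
  constructor
  · intro h
    have hb : π b = 0 := by
      apply hμ
      rw [← s3, ← h, hbot2.apply_apply_eq_zero, map_zero]
    obtain ⟨y, hy⟩ := (htop2 b).1 hb
    have ha : j₁ (a - i₁ y) = 0 := by
      rw [map_sub, s2, hy, h, sub_self]
    obtain ⟨c, hc⟩ := (hbot1 _).1 ha
    obtain ⟨d, rfl⟩ := hε c
    refine ⟨y + bd d, ?_, ?_⟩
    · rw [map_add, ← s1, hc, add_sub_cancel]
    · rw [map_add, htop1.apply_apply_eq_zero, add_zero, hy]
  · rintro ⟨y, rfl, rfl⟩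
    exact s2 y
end

section
/- Duality of interval decompositions of zigzag modules. Let k be a field, n ≥ 1, d a zigzag shape of length n, and V a zigzag module of shape d. Let V* denote the dual zigzag module of the reversed shape (all directions of d reversed): its i-th space is the dual space Hom_k(V_i, k) and its structure maps are the transposes of the structure maps of V. Suppose there is a family of k-vector spaces M_{p,q}, indexed by pairs 1 ≤ p ≤ q ≤ n, and an isomorphism of zigzag modules V ≅ ⊕_{1 ≤ p ≤ q ≤ n} M_{p,q} ⊗_k I[p,q], where M ⊗_k I[p,q] denotes the zigzag module whose i-th space is M ⊗_k (I[p,q])_i with the induced maps. Then there is an isomorphism of zigzag modules V* ≅ ⊕_{1 ≤ p ≤ q ≤ n} Hom_k(M_{p,q}, k) ⊗_k I'[p,q], where I'[p,q] is the interval module of the reversed shape supported on the same interval [p,q]. -/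
/-- The zigzag module `M ⊗ₖ V` obtained by tensoring each space of `V` with a
fixed vector space `M`, with the induced structure maps. -/
noncomputable def tensorModule {k : Type} [Field k] {d : ℕ → Bool}
    (M : Type) [AddCommGroup M] [Module k M] (V : ZigzagModule k d) :
    ZigzagModule k d where
  V i := TensorProduct k M (V.V i)
  fwd i h := LinearMap.lTensor M (V.fwd i h)
  bwd i h := LinearMap.lTensor M (V.bwd i h)

/-- The dual zigzag module `V*` of the reversed shape: its `i`-th space is the
dual space `Hom_k(V_i, k)` and its structure maps are the transposes of the
structure maps of `V`. -/
noncomputable def dualModule {k : Type} [Field k] {d : ℕ → Bool}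
    (V : ZigzagModule k d) : ZigzagModule k (fun i => !(d i)) where
  V i := Module.Dual k (V.V i)
  fwd i h := (V.bwd i (by simpa using h)).dualMap
  bwd i h := (V.fwd i (by simpa using h)).dualMap

namespace ZZAux

theorem intervalMap_symm (k : Type) [Field k] (p q i j : ℕ)
    (s : intervalSpace k p q i) (t : intervalSpace k p q j) :
    (intervalMap k p q i j s : k) * (t : k) = (s : k) * (intervalMap k p q j i t : k) := by
  obtain ⟨s, hs⟩ := s
  obtain ⟨t, ht⟩ := t
  unfold intervalMap
  by_cases h1 : intervalSpace k p q i ≤ intervalSpace k p q j <;>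
  by_cases h2 : intervalSpace k p q j ≤ intervalSpace k p q i
  · simp [h1, h2]
  · have : intervalSpace k p q i = ⊥ := by
      by_contra h
      apply h2
      have : intervalSpace k p q i = ⊤ := by
        unfold intervalSpace at h ⊢
        split_ifs at h ⊢ <;> simp_all
      rw [this]; exact le_top
    rw [this] at hs
    simp [h1, h2, (Submodule.mem_bot k).1 hs]
  · have : intervalSpace k p q j = ⊥ := by
      by_contra h
      apply h1
      have : intervalSpace k p q j = ⊤ := by
        unfold intervalSpace at h ⊢
        split_ifs at h ⊢ <;> simp_all
      rw [this]; exact le_top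
    rw [this] at ht
    simp [h1, h2, (Submodule.mem_bot k).1 ht]
  · simp [h1, h2]

/-- The pairing map. -/
noncomputable def pair (k : Type) [Field k] (M : Type) [AddCommGroup M] [Module k M]
    (S : Submodule k k) :
    TensorProduct k (Module.Dual k M) S →ₗ[k] Module.Dual k (TensorProduct k M S) :=
  (TensorProduct.dualDistrib k M S).comp
    (LinearMap.lTensor _ (((LinearMap.mul k k).domRestrict₁₂ S S)))

theorem pair_tmul (k : Type) [Field k] (M : Type) [AddCommGroup M] [Module k M]
    (S : Submodule k k) (f : Module.Dual k M) (s t : S) (m : M) :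
    pair k M S (f ⊗ₜ[k] s) (m ⊗ₜ[k] t) = f m * (s * t) := by
  simp only [pair, LinearMap.comp_apply, LinearMap.lTensor_tmul, TensorProduct.dualDistrib_apply]
  rfl

theorem pair_bij (k : Type) [Field k] (M : Type) [AddCommGroup M] [Module k M]
    (S : Submodule k k) (hS : S = ⊤ ∨ S = ⊥) : Function.Bijective (pair k M S) := by
  rcases hS with rfl | rfl
  · have e1 : ∀ x : TensorProduct k (Module.Dual k M) (⊤ : Submodule k k),
        ∃ f : Module.Dual k M, x = f ⊗ₜ[k] (⟨1, trivial⟩ : (⊤ : Submodule k k)) := by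
      intro x
      induction x with
      | zero => exact ⟨0, by simp⟩
      | tmul f s =>
        refine ⟨(s : k) • f, ?_⟩
        rw [TensorProduct.smul_tmul]
        congr 1
        ext; simp
      | add x y hx hy =>
        obtain ⟨f, rfl⟩ := hx
        obtain ⟨g, rfl⟩ := hy
        exact ⟨f + g, by rw [TensorProduct.add_tmul]⟩
    constructor
    · rw [injective_iff_map_eq_zero]
      intro x hx
      obtain ⟨f, rfl⟩ := e1 x
      have : f = 0 := by
        ext m
        have := congrArg (fun φ => φ (m ⊗ₜ[k] (⟨1, trivial⟩ : (⊤ : Submodule k k)))) hx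
        simpa [pair_tmul] using this
      simp [this]
    · intro φ
      refine ⟨(φ.comp ((TensorProduct.mk k M (⊤ : Submodule k k)).flip ⟨1, trivial⟩)) ⊗ₜ[k]
        (⟨1, trivial⟩ : (⊤ : Submodule k k)), ?_⟩
      apply TensorProduct.ext'
      intro m t
      rw [pair_tmul]
      have : t = (t : k) • (⟨1, trivial⟩ : (⊤ : Submodule k k)) := by ext; simp
      conv_rhs => rw [this, TensorProduct.tmul_smul, map_smul]
      simp [mul_comm]
  · have a1 : Subsingleton (TensorProduct k (Module.Dual k M) (⊥ : Submodule k k)) := by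
      refine subsingleton_of_forall_eq 0 fun x => ?_
      induction x with
      | zero => rfl
      | tmul f s => rw [Subsingleton.elim s 0, TensorProduct.tmul_zero]
      | add x y hx hy => rw [hx, hy, add_zero]
    refine ⟨fun _ _ _ => Subsingleton.elim _ _, fun φ => ⟨0, ?_⟩⟩
    apply TensorProduct.ext'
    intro m t
    rw [Subsingleton.elim t 0, TensorProduct.tmul_zero, map_zero, map_zero]

theorem pair_nat (k : Type) [Field k] (M : Type) [AddCommGroup M] [Module k M]
    (S T : Submodule k k) (a : S →ₗ[k] T) (b : T →ₗ[k] S)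
    (hab : ∀ (s : S) (t : T), (a s : k) * (t : k) = (s : k) * (b t : k))
    (x : TensorProduct k (Module.Dual k M) S) :
    pair k M T (LinearMap.lTensor _ a x) = (LinearMap.lTensor M b).dualMap (pair k M S x) := by
  induction x with
  | zero => simp
  | tmul f s =>
    apply TensorProduct.ext'
    intro m t
    simp [pair_tmul, LinearMap.dualMap_apply, hab]
  | add x y hx hy => simp only [map_add, hx, hy]

def symm {k : Type} [Field k] {d : ℕ → Bool} {A B : ZigzagModule k d} (f : ZigzagIso A B) :
    ZigzagIso B A where
  e i := (f.e i).symm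
  comm_fwd i h x := by
    rw [LinearEquiv.symm_apply_eq, f.comm_fwd, LinearEquiv.apply_symm_apply]
  comm_bwd i h x := by
    rw [LinearEquiv.symm_apply_eq, f.comm_bwd, LinearEquiv.apply_symm_apply]

def trans {k : Type} [Field k] {d : ℕ → Bool} {A B C : ZigzagModule k d} (f : ZigzagIso A B)
    (g : ZigzagIso B C) : ZigzagIso A C where
  e i := (f.e i).trans (g.e i)
  comm_fwd i h x := by
    simp only [LinearEquiv.trans_apply, f.comm_fwd, g.comm_fwd]
  comm_bwd i h x := by
    simp only [LinearEquiv.trans_apply, f.comm_bwd, g.comm_bwd]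

/-- Dual of an isomorphism. -/
noncomputable def dualIso {k : Type} [Field k] {d : ℕ → Bool} {A B : ZigzagModule k d}
    (f : ZigzagIso A B) : ZigzagIso (dualModule B) (dualModule A) where
  e i := (f.e i).dualMap
  comm_fwd i h x := by
    apply LinearMap.ext
    intro y
    exact congrArg (fun z => (show Module.Dual k (B.V i) from x) z) (f.comm_bwd i (by simpa using h) y).symm
  comm_bwd i h x := by
    apply LinearMap.ext
    intro y
    exact congrArg (fun z => (show Module.Dual k (B.V (i+1)) from x) z) (f.comm_fwd i (by simpa using h) y).symm

theorem iSpace_cases (k : Type) [Field k] (p q i : ℕ) :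
    intervalSpace k p q i = ⊤ ∨ intervalSpace k p q i = ⊥ := by
  unfold intervalSpace
  split_ifs <;> simp

/-- Dual of a tensor interval module. -/
noncomputable def tensorIso (k : Type) [Field k] (d : ℕ → Bool) (M : Type) [AddCommGroup M]
    [Module k M] (p q : ℕ) :
    ZigzagIso (tensorModule (Module.Dual k M) (intervalModule k (fun i => !(d i)) p q))
      (dualModule (tensorModule M (intervalModule k d p q))) where
  e i := LinearEquiv.ofBijective (pair k M (intervalSpace k p q i))
    (pair_bij k M _ (iSpace_cases k p q i))
  comm_fwd i h x := pair_nat k M _ _ (intervalMap k p q i (i+1)) (intervalMap k p q (i+1) i)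
    (intervalMap_symm k p q i (i+1)) x
  comm_bwd i h x := pair_nat k M _ _ (intervalMap k p q (i+1) i) (intervalMap k p q i (i+1))
    (intervalMap_symm k p q (i+1) i) x

theorem toModule_apply {k I : Type} [Field k] [DecidableEq I] (A B : I → Type)
    [∀ j, AddCommGroup (A j)] [∀ j, Module k (A j)]
    [∀ j, AddCommGroup (B j)] [∀ j, Module k (B j)] (f : ∀ j, A j →ₗ[k] B j)
    (x : DirectSum I A) (j : I) :
    (DirectSum.toModule k I (DirectSum I B) fun j => (DirectSum.lof k I B j).comp (f j)) x j
      = f j (x j) := by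
  have : (DirectSum.toModule k I (DirectSum I B) fun j => (DirectSum.lof k I B j).comp (f j))
      = DirectSum.lmap f := by
    apply DirectSum.linearMap_ext
    intro j
    ext x
    simp
  rw [this, DirectSum.lmap_apply]

/-- The dual of a finite direct sum, spacewise. -/
noncomputable def dsumEquiv (k I : Type) [Field k] [DecidableEq I] [Fintype I] (A B : I → Type)
    [∀ j, AddCommGroup (A j)] [∀ j, Module k (A j)]
    [∀ j, AddCommGroup (B j)] [∀ j, Module k (B j)] (g : ∀ j, B j ≃ₗ[k] Module.Dual k (A j)) :
    Module.Dual k (DirectSum I A) ≃ₗ[k] DirectSum I B :=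
  ((DFinsupp.lsum (M := A) (N := k) k).symm.trans
    (LinearEquiv.piCongrRight fun j => (g j).symm)).trans
    (DirectSum.linearEquivFunOnFintype k I B).symm

theorem dsumEquiv_apply (k I : Type) [Field k] [DecidableEq I] [Fintype I] (A B : I → Type)
    [∀ j, AddCommGroup (A j)] [∀ j, Module k (A j)]
    [∀ j, AddCommGroup (B j)] [∀ j, Module k (B j)] (g : ∀ j, B j ≃ₗ[k] Module.Dual k (A j))
    (φ : Module.Dual k (DirectSum I A)) (j : I) :
    dsumEquiv k I A B g φ j = (g j).symm (φ.comp (DirectSum.lof k I A j)) := by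
  change (DirectSum.linearEquivFunOnFintype k I B) (dsumEquiv k I A B g φ) j = _
  simp only [dsumEquiv, LinearEquiv.trans_apply, LinearEquiv.apply_symm_apply]
  rfl

theorem dsum_nat (k I : Type) [Field k] [DecidableEq I] [Fintype I] (A B A' B' : I → Type)
    [∀ j, AddCommGroup (A j)] [∀ j, Module k (A j)]
    [∀ j, AddCommGroup (B j)] [∀ j, Module k (B j)]
    [∀ j, AddCommGroup (A' j)] [∀ j, Module k (A' j)]
    [∀ j, AddCommGroup (B' j)] [∀ j, Module k (B' j)]
    (g : ∀ j, B j ≃ₗ[k] Module.Dual k (A j))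
    (g' : ∀ j, B' j ≃ₗ[k] Module.Dual k (A' j))
    (a : ∀ j, A' j →ₗ[k] A j) (b : ∀ j, B j →ₗ[k] B' j)
    (h : ∀ j x, g' j (b j x) = (a j).dualMap (g j x))
    (φ : Module.Dual k (DirectSum I A)) :
    dsumEquiv k I A' B' g' ((DirectSum.toModule k I (DirectSum I A)
        fun j => (DirectSum.lof k I A j).comp (a j)).dualMap φ) =
      (DirectSum.toModule k I (DirectSum I B') fun j => (DirectSum.lof k I B' j).comp (b j))
        (dsumEquiv k I A B g φ) := by
  apply DFinsupp.ext
  intro j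
  refine (dsumEquiv_apply ..).trans ?_
  refine Eq.trans ?_ (toModule_apply B B' b _ j).symm
  rw [dsumEquiv_apply, LinearEquiv.symm_apply_eq, h, LinearEquiv.apply_symm_apply]
  ext x
  simp [LinearMap.dualMap_apply]

/-- The dual of a finite direct sum. -/
noncomputable def dsumIso (k : Type) [Field k] (d : ℕ → Bool) (I : Type) [DecidableEq I]
    [Fintype I] (F : I → ZigzagModule k d) (G : I → ZigzagModule k (fun i => !(d i)))
    (g : ∀ j, ZigzagIso (G j) (dualModule (F j))) :
    ZigzagIso (dualModule (dsumModule k d I F)) (dsumModule k (fun i => !(d i)) I G) where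
  e i := dsumEquiv k I (fun j => (F j).V i) (fun j => (G j).V i) (fun j => (g j).e i)
  comm_fwd i h x := dsum_nat k I _ _ _ _ (fun j => (g j).e i) (fun j => (g j).e (i+1))
    (fun j => (F j).bwd i (by simpa using h)) (fun j => (G j).fwd i h)
    (fun j x => (g j).comm_fwd i h x) x
  comm_bwd i h x := dsum_nat k I _ _ _ _ (fun j => (g j).e (i+1)) (fun j => (g j).e i)
    (fun j => (F j).fwd i (by simpa using h)) (fun j => (G j).bwd i h)
    (fun j x => (g j).comm_bwd i h x) x

end ZZAux

/-- **Duality of interval decompositions of zigzag modules.**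
If a zigzag module `V` of shape `d` decomposes as
`V ≅ ⊕_{p ≤ q < n} M_{p,q} ⊗ I[p,q]`, then its dual `V*` (of the reversed
shape) decomposes as `V* ≅ ⊕_{p ≤ q < n} (M_{p,q})* ⊗ I'[p,q]`, where
`I'[p,q]` is the interval module of the reversed shape supported on the same
interval. -/
theorem dual_interval_decomposition
    (k : Type) [Field k] (n : ℕ) (hn : 1 ≤ n) (d : ℕ → Bool)
    (V : ZigzagModule k d)
    (M : ℕ → ℕ → Type)
    [∀ p q, AddCommGroup (M p q)] [∀ p q, Module k (M p q)]
    (hiso : Nonempty (ZigzagIso V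
      (dsumModule k d {pq : ℕ × ℕ // pq.1 ≤ pq.2 ∧ pq.2 < n}
        (fun j => tensorModule (M j.1.1 j.1.2)
          (intervalModule k d j.1.1 j.1.2))))) :
    Nonempty (ZigzagIso (dualModule V)
      (dsumModule k (fun i => !(d i)) {pq : ℕ × ℕ // pq.1 ≤ pq.2 ∧ pq.2 < n}
        (fun j => tensorModule (Module.Dual k (M j.1.1 j.1.2))
          (intervalModule k (fun i => !(d i)) j.1.1 j.1.2)))) := by
  obtain ⟨f⟩ := hiso
  have hfin : Finite {pq : ℕ × ℕ // pq.1 ≤ pq.2 ∧ pq.2 < n} := by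
    refine Set.Finite.to_subtype (Set.Finite.subset
      ((Set.finite_Iio n).prod (Set.finite_Iio n)) ?_)
    rintro ⟨p, q⟩ h
    obtain ⟨h1, h2⟩ : p ≤ q ∧ q < n := h
    exact ⟨lt_of_le_of_lt h1 h2, h2⟩
  have := Fintype.ofFinite {pq : ℕ × ℕ // pq.1 ≤ pq.2 ∧ pq.2 < n}
  exact ⟨ZZAux.trans (ZZAux.dualIso (ZZAux.symm f)) (ZZAux.dsumIso k d _ _ _
    fun j => ZZAux.tensorIso k d (M j.1.1 j.1.2) j.1.1 j.1.2)⟩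
end
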